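/- arXiv:math/0404169 — 2 statements merged into one kernel-verified Lean document; each statement's English description precedes it below -/
import Mathlib

section
/- For six general points in ℙ², there is no nonzero plane curve of degree 14 with multiplicity at least 6 at each of the six points; i.e. ℓ(L(14, 0, 6^6)) = −1. Consequently ℓ(L(14, m_0, 6^6)) = −1 for every m_0 ≥ 0 when a seventh general point p_0 is added. -/
open MvPolynomial

/-- The iterated partial derivative corresponding to the multi-index `ν`. -/
noncomputable def mderiv (ν : Fin 3 → ℕ) :
    MvPolynomial (Fin 3) ℂ →ₗ[ℂ] MvPolynomial (Fin 3) ℂ :=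
  ((pderiv (R := ℂ) (0 : Fin 3)).toLinearMap ^ ν 0) ∘ₗ
  ((pderiv (R := ℂ) (1 : Fin 3)).toLinearMap ^ ν 1) ∘ₗ
  ((pderiv (R := ℂ) (2 : Fin 3)).toLinearMap ^ ν 2)

/-- The linear system `L(d; m)` of homogeneous forms of degree `d` in three variables
all of whose partial derivatives of order `< m i` vanish at the point `p i`,
i.e. plane curves of degree `d` with multiplicity at least `m i` at `p i`. -/
noncomputable def linSys {k : ℕ} (p : Fin k → Fin 3 → ℂ) (d : ℕ) (m : Fin k → ℕ) :
    Submodule ℂ (MvPolynomial (Fin 3) ℂ) :=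
  (homogeneousSubmodule (Fin 3) ℂ d) ⊓
    ⨅ (i : Fin k), ⨅ (ν : Fin 3 → ℕ), ⨅ (_ : ν 0 + ν 1 + ν 2 < m i),
      LinearMap.ker ((aeval (p i)).toLinearMap ∘ₗ mderiv ν)

/-- The projective dimension `ℓ` of the linear system (`-1` means empty). -/
noncomputable def projDim {k : ℕ} (p : Fin k → Fin 3 → ℂ) (d : ℕ) (m : Fin k → ℕ) : ℤ :=
  (Module.finrank ℂ (linSys p d m) : ℤ) - 1

/-- The virtual dimension `v = d(d+3)/2 - ∑ mᵢ(mᵢ+1)/2`. -/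
def virtDim {k : ℕ} (d : ℕ) (m : Fin k → ℕ) : ℤ :=
  ((d : ℤ) * (d + 3)) / 2 - ∑ i : Fin k, ((m i : ℤ) * (m i + 1)) / 2

/-- The quasi-homogeneous multiplicity vector `(m₀, 6, …, 6)` on `n + 1` points. -/
def qh (n m0 : ℕ) : Fin (n + 1) → ℕ := fun i => if i = 0 then m0 else 6

/-- A property `Q` of configurations of `k` points of `ℙ²` (given by nonzero homogeneous
coordinate vectors) holds for points in general position: there is a nonzero polynomial
in the coordinates such that `Q` holds whenever it does not vanish. -/
def Generically (k : ℕ) (Q : (Fin k → Fin 3 → ℂ) → Prop) : Prop :=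
  ∃ P : MvPolynomial (Fin k × Fin 3) ℂ, P ≠ 0 ∧
    ∀ p : Fin k → Fin 3 → ℂ, (∀ i, p i ≠ 0) →
      eval (fun x => p x.1 x.2) P ≠ 0 → Q p

/-!
Choose coordinates in which three of the six points are the coordinate points. A form of degree `d`
has multiplicity at least `m` there exactly when all its exponents are at most `k = d - m`, and the
Cremona transformation replaces every exponent `e` by `k - e`. It therefore turns curves of degree
`d` with multiplicity `m` at all six points into curves of degree `2d - 3m` with multiplicity `m` at
the images of the other three points and `d - 2m` at the coordinate points. A second transformation,
based at those three images, leads to curves of degree `4d - 9m` with multiplicity `d - 2m` at three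
noncollinear points; for `d = 14` and `m = 6` these are conics singular at three such points. At
every stage there is no curve once three times the multiplicity at the base points exceeds twice the
degree, because the exponents are then too small to add up to the degree. This settles every case
with `5d < 12m`, and the ratio is optimal: the six conics through five of the points have total
degree `12` and multiplicity `5` at each point.
-/

section Multiplicity

variable {σ τ K : Type*} [Field K]

/-- The polynomials vanishing to order at least `m` at the point `p` of affine space. For a form,
this is multiplicity at least `m` at the projective point with homogeneous coordinates `p`. -/
noncomputable abbrev fatPointIdeal (p : σ → K) (m : ℕ) : Ideal (MvPolynomial σ K) :=
  vanishingIdeal K {p} ^ m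

theorem algHom_mem_fatPointIdeal (φ : MvPolynomial σ K →ₐ[K] MvPolynomial τ K) {p : τ → K}
    {q : σ → K} (hφ : ∀ i, aeval p (φ (X i)) = q i) {m : ℕ} {F : MvPolynomial σ K}
    (hF : F ∈ fatPointIdeal q m) : φ F ∈ fatPointIdeal p m := by
  have hle : (vanishingIdeal K {q}).map φ ≤ vanishingIdeal K {p} := by
    rw [Ideal.map_le_iff_le_comap]
    intro G hG
    have hcomp : (aeval p).comp φ = aeval q :=
      MvPolynomial.algHom_ext fun i => (hφ i).trans (aeval_X q i).symm
    rw [mem_vanishingIdeal_singleton_iff, ← hcomp] at hG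
    exact (mem_vanishingIdeal_singleton_iff _ _).2 hG
  refine Ideal.pow_right_mono hle m ?_
  rw [← Ideal.map_pow]
  exact Ideal.mem_map_of_mem φ hF

theorem vanishingIdeal_zero_eq_idealOfVars : vanishingIdeal K {(0 : σ → K)} = idealOfVars σ K := by
  ext F
  rw [mem_vanishingIdeal_singleton_iff, ← pow_one (idealOfVars σ K), mem_pow_idealOfVars_iff']
  simp [Finsupp.degree_eq_zero_iff, constantCoeff_eq]

/-- The Taylor expansion `F(x + p)` of `F` at the point `p`, in the displacement `x`. -/
noncomputable def taylorAt (p : σ → K) : MvPolynomial σ K →ₐ[K] MvPolynomial σ K :=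
  aeval fun i => X i + C (p i)

theorem taylorAt_neg_taylorAt (p : σ → K) (F : MvPolynomial σ K) :
    taylorAt (-p) (taylorAt p F) = F := by
  have h : (taylorAt (-p)).comp (taylorAt p) = AlgHom.id K _ :=
    MvPolynomial.algHom_ext fun i => by simp [taylorAt]
  exact DFunLike.congr_fun h F

theorem mem_fatPointIdeal_of_taylorAt_mem {p : σ → K} {m : ℕ} {F : MvPolynomial σ K}
    (hF : taylorAt p F ∈ idealOfVars σ K ^ m) : F ∈ fatPointIdeal p m := by
  rw [← vanishingIdeal_zero_eq_idealOfVars] at hF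
  rw [← taylorAt_neg_taylorAt p F]
  exact algHom_mem_fatPointIdeal _ (fun i => by simp [taylorAt]) hF

theorem taylorAt_mem_idealOfVars_pow {p : σ → K} {m : ℕ} {F : MvPolynomial σ K}
    (hF : F ∈ fatPointIdeal p m) : taylorAt p F ∈ idealOfVars σ K ^ m := by
  rw [← vanishingIdeal_zero_eq_idealOfVars]
  exact algHom_mem_fatPointIdeal _ (fun i => by simp [taylorAt]) hF

theorem pderiv_taylorAt (p : σ → K) (i : σ) (F : MvPolynomial σ K) :
    pderiv i (taylorAt p F) = taylorAt p (pderiv i F) := by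
  classical
  induction F using MvPolynomial.induction_on with
  | C a => simp [taylorAt, algHom_C]
  | add F G hF hG => simp only [map_add, hF, hG]
  | mul_X F j hF =>
    have hX : pderiv i (taylorAt p (X j)) = taylorAt p (pderiv i (X j)) := by
      simp [taylorAt, pderiv_X, Pi.single_apply, apply_ite]
    simp only [map_mul, Derivation.leibniz, smul_eq_mul, map_add, hF, hX]

theorem mem_idealOfVars_pow_succ [CharZero K] {m : ℕ} {F : MvPolynomial σ K}
    (h0 : coeff 0 F = 0) (hF : ∀ i, pderiv i F ∈ idealOfVars σ K ^ m) :
    F ∈ idealOfVars σ K ^ (m + 1) := by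
  rw [mem_pow_idealOfVars_iff']
  intro e he
  rcases eq_or_ne e 0 with rfl | he0
  · exact h0
  · obtain ⟨i, hi⟩ := Finsupp.ne_iff.1 he0
    obtain ⟨e, rfl⟩ := exists_add_of_le (Finsupp.single_le_iff.2 (Nat.one_le_iff_ne_zero.2 hi))
    rw [map_add, Finsupp.degree_single, add_comm, add_lt_add_iff_right] at he
    have hcoeff := (mem_pow_idealOfVars_iff' m _).1 (hF i) e he
    rw [coeff_pderiv, add_comm] at hcoeff
    exact (mul_eq_zero.1 hcoeff).resolve_right (Nat.cast_add_one_ne_zero _)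

theorem mem_fatPointIdeal_succ [CharZero K] {p : σ → K} {m : ℕ} {F : MvPolynomial σ K}
    (h0 : aeval p F = 0) (hF : ∀ i, pderiv i F ∈ fatPointIdeal p m) :
    F ∈ fatPointIdeal p (m + 1) := by
  refine mem_fatPointIdeal_of_taylorAt_mem (mem_idealOfVars_pow_succ ?_ fun i => ?_)
  · have hcomp : (aeval (0 : σ → K)).comp (taylorAt p) = aeval p :=
      MvPolynomial.algHom_ext fun i => by simp [taylorAt]
    rw [← h0, ← hcomp]
    simp [constantCoeff_eq]
  · rw [pderiv_taylorAt]
    exact taylorAt_mem_idealOfVars_pow (hF i)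

end Multiplicity

section Derivatives

theorem pderiv_comm {σ R : Type*} [CommRing R] (i j : σ) (F : MvPolynomial σ R) :
    pderiv i (pderiv j F) = pderiv j (pderiv i F) := by
  classical
  have hbracket : ⁅pderiv (R := R) i, pderiv (R := R) j⁆ = 0 :=
    derivation_ext fun l => by
      simp [Derivation.commutator_apply, pderiv_X, Pi.single_apply, apply_ite]
  simpa [Derivation.commutator_apply, sub_eq_zero] using DFunLike.congr_fun hbracket F

theorem mderiv_pderiv (ν : Fin 3 → ℕ) (i : Fin 3) (F : MvPolynomial (Fin 3) ℂ) :
    mderiv ν (pderiv i F) = mderiv (ν + Pi.single i 1) F := by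
  have hcomm (a b : Fin 3) (n : ℕ) (G : MvPolynomial (Fin 3) ℂ) :
      ((pderiv (R := ℂ) a).toLinearMap ^ n) (pderiv b G) =
        pderiv b (((pderiv (R := ℂ) a).toLinearMap ^ n) G) :=
    LinearMap.congr_fun ((show Commute (pderiv (R := ℂ) a).toLinearMap (pderiv b).toLinearMap from
      LinearMap.ext (pderiv_comm a b)).pow_left n) G
  fin_cases i <;> simp [mderiv, pow_succ, hcomm]

theorem mem_fatPointIdeal_of_aeval_mderiv_eq_zero {p : Fin 3 → ℂ} {m : ℕ}
    {F : MvPolynomial (Fin 3) ℂ}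
    (hF : ∀ ν : Fin 3 → ℕ, ν 0 + ν 1 + ν 2 < m → aeval p (mderiv ν F) = 0) :
    F ∈ fatPointIdeal p m := by
  induction m generalizing F with
  | zero => simp
  | succ m ih =>
    have h0 : aeval p F = 0 := by simpa [mderiv] using hF 0 (by simp)
    refine mem_fatPointIdeal_succ h0 fun i => ih fun ν hν => ?_
    rw [mderiv_pderiv]
    have horder : ∑ j, (ν + Pi.single i 1 : Fin 3 → ℕ) j = ∑ j, ν j + 1 := by
      simp [Finset.sum_add_distrib]
    rw [Fin.sum_univ_three, Fin.sum_univ_three] at horder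
    exact hF _ (by omega)

end Derivatives

section Homogeneous

variable {σ K : Type*} [Field K]

theorem aeval_mul_of_isHomogeneous {S : Type*} [CommRing S] [Algebra K S] {d : ℕ}
    {F : MvPolynomial σ K} (hF : F.IsHomogeneous d) (a : S) (g : σ → S) :
    aeval (fun i => a * g i) F = a ^ d * aeval g F := by
  rw [aeval_def, aeval_def, eval₂_eq, eval₂_eq, Finset.mul_sum]
  refine Finset.sum_congr rfl fun e he => ?_
  rw [hF.degree_eq_sum_deg_support he, Finset.prod_congr rfl fun i _ => mul_pow a (g i) (e i),
    Finset.prod_mul_distrib, Finset.prod_pow_eq_pow_sum]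
  ring

theorem mem_fatPointIdeal_smul {d m : ℕ} {F : MvPolynomial σ K} (hF : F.IsHomogeneous d)
    {p : σ → K} (hp : F ∈ fatPointIdeal p m) {c : K} (hc : c ≠ 0) :
    F ∈ fatPointIdeal (c • p) m := by
  let scale : MvPolynomial σ K →ₐ[K] MvPolynomial σ K := aeval fun i => C c⁻¹ * X i
  have hscale : scale F ∈ fatPointIdeal (c • p) m :=
    algHom_mem_fatPointIdeal scale (fun i => by simp [scale, hc]) hp
  have hF_eq : F = C (c ^ d) * scale F := by
    rw [aeval_mul_of_isHomogeneous hF, aeval_X_left_apply, ← mul_assoc, ← C_pow, ← C_mul, ← mul_pow,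
      mul_inv_cancel₀ hc, one_pow, C_1, one_mul]
  rw [hF_eq]
  exact Ideal.mul_mem_left _ _ hscale

section LinSubst

variable [Fintype σ]

/-- The substitution `F(x) ↦ F(x P)` for row vectors `x`; it brings the point with homogeneous
coordinates `x P` to the point `x`, hence the rows of `P` to the coordinate points. -/
noncomputable def linSubst (P : Matrix σ σ K) : MvPolynomial σ K →ₐ[K] MvPolynomial σ K :=
  aeval fun i => ∑ j, C (P j i) * X j

theorem linSubst_linSubst (P Q : Matrix σ σ K) (F : MvPolynomial σ K) :
    linSubst Q (linSubst P F) = linSubst (Q * P) F := by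
  have h : (linSubst Q).comp (linSubst P) = linSubst (Q * P) :=
    MvPolynomial.algHom_ext fun i => by
      simp only [linSubst, AlgHom.comp_apply, aeval_X, map_sum, map_mul, algHom_C, algebraMap_eq,
        Matrix.mul_apply, Finset.mul_sum, Finset.sum_mul]
      rw [Finset.sum_comm]
      exact Finset.sum_congr rfl fun j _ => Finset.sum_congr rfl fun k _ => by ring
  exact DFunLike.congr_fun h F

theorem linSubst_injective [DecidableEq σ] {P : Matrix σ σ K} (hP : P.det ≠ 0) :
    Function.Injective (linSubst P) := by
  have hone : linSubst (1 : Matrix σ σ K) = AlgHom.id K _ :=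
    MvPolynomial.algHom_ext fun i => by simp [linSubst, Matrix.one_apply]
  refine Function.LeftInverse.injective (g := linSubst P⁻¹) fun F => ?_
  rw [linSubst_linSubst, Matrix.nonsing_inv_mul _ hP.isUnit, hone, AlgHom.id_apply]

theorem isHomogeneous_linSubst (P : Matrix σ σ K) {d : ℕ} {F : MvPolynomial σ K}
    (hF : F.IsHomogeneous d) : (linSubst P F).IsHomogeneous d := by
  simpa [linSubst] using hF.aeval (n := 1) (fun i => ∑ j, C (P j i) * X j)
    fun i => IsHomogeneous.sum _ _ _ fun j _ => isHomogeneous_C_mul_X _ _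

theorem linSubst_mem_fatPointIdeal {P : Matrix σ σ K} {x : σ → K} {m : ℕ} {F : MvPolynomial σ K}
    (hF : F ∈ fatPointIdeal (Matrix.vecMul x P) m) : linSubst P F ∈ fatPointIdeal x m :=
  algHom_mem_fatPointIdeal _
    (fun i => by simp [linSubst, Matrix.vecMul, dotProduct, mul_comm]) hF

end LinSubst

theorem degree_eq_of_mem_support {d : ℕ} {F : MvPolynomial σ K} (hF : F.IsHomogeneous d)
    {e : σ →₀ ℕ} (he : e ∈ F.support) : e.degree = d := by
  rw [hF.degree_eq_sum_deg_support he, Finsupp.degree_apply]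

theorem degree_erase_of_mem_support {d : ℕ} {F : MvPolynomial σ K} (hF : F.IsHomogeneous d)
    (j : σ) {e : σ →₀ ℕ} (he : e ∈ F.support) : e j + (e.erase j).degree = d := by
  rw [← degree_eq_of_mem_support hF he, ← Finsupp.degree_single j (e j), ← map_add,
    Finsupp.single_add_erase]

variable [DecidableEq σ]

/-- The dehomogenization of `F` in the chart `x j = 1`, centred at the `j`-th coordinate point. -/
noncomputable def dehomogenize (j : σ) : MvPolynomial σ K →ₐ[K] MvPolynomial σ K :=
  aeval (Function.update X j 1)

theorem dehomogenize_mem_idealOfVars_pow {j : σ} {m : ℕ} {F : MvPolynomial σ K}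
    (hF : F ∈ fatPointIdeal (Pi.single j 1) m) : dehomogenize j F ∈ idealOfVars σ K ^ m := by
  rw [← vanishingIdeal_zero_eq_idealOfVars]
  refine algHom_mem_fatPointIdeal _ (fun i => ?_) hF
  rcases eq_or_ne i j with rfl | hij
  · simp [dehomogenize]
  · simp [dehomogenize, hij]

theorem dehomogenize_eq_sum (j : σ) (F : MvPolynomial σ K) :
    dehomogenize j F = ∑ e ∈ F.support, monomial (e.erase j) (coeff e F) := by
  nth_rw 1 [F.as_sum]
  rw [map_sum]
  refine Finset.sum_congr rfl fun e _ => ?_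
  rw [dehomogenize, aeval_monomial, monomial_eq, algebraMap_eq,
    ← Finsupp.mul_prod_erase' e j _ fun i => pow_zero _, Function.update_self, one_pow, one_mul]
  congr 1
  refine Finset.prod_congr rfl fun i hi => ?_
  have hij : i ≠ j := by simp_all
  simp only [Function.update_of_ne hij]

theorem coeff_erase_dehomogenize {d : ℕ} {F : MvPolynomial σ K} (hF : F.IsHomogeneous d)
    (j : σ) {e : σ →₀ ℕ} (he : e ∈ F.support) :
    coeff (e.erase j) (dehomogenize j F) = coeff e F := by
  rw [dehomogenize_eq_sum, coeff_sum, Finset.sum_eq_single_of_mem e he, coeff_monomial, if_pos rfl]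
  intro f hf hfe
  rw [coeff_monomial, if_neg]
  intro herase
  have hfj := degree_erase_of_mem_support hF j hf
  rw [herase] at hfj
  apply hfe
  rw [← Finsupp.single_add_erase j f, ← Finsupp.single_add_erase j e, herase,
    Nat.add_right_cancel (hfj.trans (degree_erase_of_mem_support hF j he).symm)]

theorem add_le_of_mem_fatPointIdeal_single {d m : ℕ} {F : MvPolynomial σ K}
    (hF : F.IsHomogeneous d) {j : σ} (hj : F ∈ fatPointIdeal (Pi.single j 1) m)
    {e : σ →₀ ℕ} (he : e ∈ F.support) : e j + m ≤ d := by
  have hm : m ≤ (e.erase j).degree :=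
    (mem_pow_idealOfVars_iff m _).1 (dehomogenize_mem_idealOfVars_pow hj) _
      (by rwa [mem_support_iff, coeff_erase_dehomogenize hF j he, ← mem_support_iff])
  have hdeg := degree_erase_of_mem_support hF j he
  omega

theorem mem_fatPointIdeal_single {d m : ℕ} {F : MvPolynomial σ K} (hF : F.IsHomogeneous d)
    {j : σ} (hj : ∀ e ∈ F.support, e j + m ≤ d) : F ∈ fatPointIdeal (Pi.single j 1) m := by
  rw [F.as_sum]
  refine Ideal.sum_mem _ fun e he => ?_
  have hprod : (e.erase j).prod (fun i n => (X i : MvPolynomial σ K) ^ n) ∈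
      fatPointIdeal (Pi.single j 1) (e.erase j).degree := by
    rw [fatPointIdeal, Finsupp.degree_apply, ← Finset.prod_pow_eq_pow_sum]
    refine Ideal.prod_mem_prod fun i hi => Ideal.pow_mem_pow ?_ _
    have hij : i ≠ j := by simp_all
    simp [hij]
  have hm : m ≤ (e.erase j).degree := by
    have hdeg := degree_erase_of_mem_support hF j he
    have hej := hj e he
    omega
  rw [monomial_eq, ← Finsupp.mul_prod_erase' e j _ fun i => pow_zero _]
  exact Ideal.mul_mem_left _ _ (Ideal.mul_mem_left _ _ (Ideal.pow_le_pow_right hm hprod))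

end Homogeneous

section Cremona

variable {σ : Type*} [Fintype σ]

/-- The standard Cremona involution `x ↦ (1 / x i)ᵢ` of projective space, with denominators
cleared; for three coordinates, `(x : y : z) ↦ (y z : z x : x y)`. -/
def cremona [DecidableEq σ] {R : Type*} [CommSemiring R] (x : σ → R) : σ → R :=
  fun i => ∏ j ∈ Finset.univ.erase i, x j

theorem mul_cremona [DecidableEq σ] {R : Type*} [CommSemiring R] (x : σ → R) (i : σ) :
    x i * cremona x i = ∏ j, x j :=
  Finset.mul_prod_erase _ _ (Finset.mem_univ i)

theorem map_cremona [DecidableEq σ] {R S : Type*} [CommSemiring R] [CommSemiring S] (f : R →+* S)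
    (x : σ → R) (i : σ) : f (cremona x i) = cremona (fun j => f (x j)) i :=
  map_prod f _ _

theorem cremona_ne_zero [DecidableEq σ] {K : Type*} [Field K] {x : σ → K} (hx : ∀ i, x i ≠ 0)
    (i : σ) : cremona x i ≠ 0 :=
  Finset.prod_ne_zero_iff.2 fun j _ => hx j

theorem exists_cremona_cremona_eq_smul [DecidableEq σ] {K : Type*} [Field K] {x : σ → K}
    (hx : ∀ i, x i ≠ 0) : ∃ c : K, c ≠ 0 ∧ cremona (cremona x) = c • x := by
  have hprod : ∏ j, x j ≠ 0 := Finset.prod_ne_zero_iff.2 fun j _ => hx j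
  refine ⟨(∏ j, cremona x j) / ∏ j, x j,
    div_ne_zero (Finset.prod_ne_zero_iff.2 fun j _ => cremona_ne_zero hx j) hprod,
    funext fun i => ?_⟩
  rw [Pi.smul_apply, smul_eq_mul, ← mul_cremona (cremona x) i, ← mul_cremona x i]
  have hxi := hx i
  have hcremona := cremona_ne_zero hx i
  field_simp

/-- The Cremona transform of a form: `F(1 / x i)` times the `k`-th power of every coordinate, that
is, the exponents `e` of `F` are replaced by `k - e`. It is meaningful when they are all at
most `k`; otherwise the subtraction is truncated. -/
noncomputable def reflect {R : Type*} [CommSemiring R] (k : ℕ) (F : MvPolynomial σ R) :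
    MvPolynomial σ R :=
  ∑ e ∈ F.support, monomial (Finsupp.equivFunOnFinite.symm (fun _ => k) - e) (coeff e F)

variable {K : Type*} [Field K] {k d d' : ℕ} {F : MvPolynomial σ K}

theorem exists_of_mem_support_reflect {f : σ →₀ ℕ} (hf : f ∈ (reflect k F).support) :
    ∃ e ∈ F.support, Finsupp.equivFunOnFinite.symm (fun _ => k) - e = f := by
  classical
  rw [mem_support_iff, reflect, coeff_sum] at hf
  obtain ⟨e, he, hne⟩ := Finset.exists_ne_zero_of_sum_ne_zero hf
  rw [coeff_monomial] at hne
  exact ⟨e, he, (ite_ne_right_iff.1 hne).1⟩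

theorem le_of_mem_support_reflect {f : σ →₀ ℕ} (hf : f ∈ (reflect k F).support) (i : σ) :
    f i ≤ k := by
  obtain ⟨e, -, rfl⟩ := exists_of_mem_support_reflect hf
  exact Nat.sub_le _ _

theorem eq_zero_of_reflect_eq_zero (hk : ∀ e ∈ F.support, ∀ i, e i ≤ k)
    (h : reflect k F = 0) : F = 0 := by
  classical
  by_contra hF
  obtain ⟨e, he⟩ := support_nonempty.2 hF
  have hcoeff := congrArg (coeff (Finsupp.equivFunOnFinite.symm (fun _ => k) - e)) h
  rw [reflect, coeff_sum, Finset.sum_eq_single_of_mem e he, coeff_monomial, if_pos rfl,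
    coeff_zero] at hcoeff
  · exact mem_support_iff.1 he hcoeff
  · intro f hf hfe
    rw [coeff_monomial, if_neg]
    refine fun hsub => hfe (Finsupp.ext fun i => ?_)
    have hi : k - f i = k - e i := DFunLike.congr_fun hsub i
    have hfi := hk f hf i
    have hei := hk e he i
    omega

theorem isHomogeneous_reflect (hF : F.IsHomogeneous d) (hk : ∀ e ∈ F.support, ∀ i, e i ≤ k)
    (hd : d + d' = Fintype.card σ * k) : (reflect k F).IsHomogeneous d' := by
  refine IsHomogeneous.sum _ _ _ fun e he => isHomogeneous_monomial _ ?_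
  have hle : e ≤ Finsupp.equivFunOnFinite.symm fun _ => k := hk e he
  have hdeg := degree_eq_of_mem_support hF he
  have hsum := congrArg Finsupp.degree (tsub_add_cancel_of_le hle)
  rw [map_add, hdeg, Finsupp.degree_eq_sum (Finsupp.equivFunOnFinite.symm _)] at hsum
  simp only [Finsupp.equivFunOnFinite_symm_apply_apply, Finset.sum_const, Finset.card_univ,
    smul_eq_mul] at hsum
  omega

theorem prod_X_pow_mul_reflect [DecidableEq σ] (hF : F.IsHomogeneous d)
    (hk : ∀ e ∈ F.support, ∀ i, e i ≤ k) :
    (∏ i, X i) ^ d * reflect k F = (∏ i, X i) ^ k * aeval (cremona X) F := by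
  rw [reflect, Finset.mul_sum, aeval_def, eval₂_eq', Finset.mul_sum]
  refine Finset.sum_congr rfl fun e he => ?_
  have hdeg : ∑ i, e i = d := by
    rw [← Finsupp.degree_eq_sum, degree_eq_of_mem_support hF he]
  have hpow : (∏ i, (X i : MvPolynomial σ K)) ^ d = ∏ i, (X i * cremona X i) ^ e i := by
    simp only [mul_cremona, Finset.prod_pow_eq_pow_sum, hdeg]
  have hmonomial (i : σ) : (X i * cremona X i : MvPolynomial σ K) ^ e i * X i ^ (k - e i) =
      X i ^ k * cremona X i ^ e i := by
    rw [mul_pow, ← Nat.add_sub_of_le (hk e he i), pow_add, Nat.add_sub_cancel_left]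
    ring
  have hprod : (∏ i, (X i : MvPolynomial σ K)) ^ d * ∏ i, X i ^ (k - e i) =
      (∏ i, X i) ^ k * ∏ i, cremona X i ^ e i := by
    rw [hpow, ← Finset.prod_pow, ← Finset.prod_mul_distrib, ← Finset.prod_mul_distrib]
    exact Finset.prod_congr rfl fun i _ => hmonomial i
  rw [monomial_eq, Finsupp.prod_fintype _ _ fun i => pow_zero _, mul_left_comm,
    mul_left_comm ((∏ i, X i) ^ k)]
  exact congrArg _ hprod

theorem reflect_mem_fatPointIdeal [DecidableEq σ] (hF : F.IsHomogeneous d)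
    (hk : ∀ e ∈ F.support, ∀ i, e i ≤ k) {x : σ → K} (hx : ∀ i, x i ≠ 0) {m : ℕ}
    (hm : F ∈ fatPointIdeal (cremona x) m) : reflect k F ∈ fatPointIdeal x m := by
  have haeval : aeval (cremona X) F ∈ fatPointIdeal x m :=
    algHom_mem_fatPointIdeal _ (fun i => by simp [cremona]) hm
  have hmul := Ideal.mul_mem_left _ ((∏ i, X i) ^ k) haeval
  rw [← prod_X_pow_mul_reflect hF hk] at hmul
  refine (Ideal.IsMaximal.mul_mem_pow _ hmul).resolve_left fun hprod => ?_
  rw [mem_vanishingIdeal_singleton_iff] at hprod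
  simp [Finset.prod_eq_zero_iff, hx] at hprod

theorem reflect_mem_fatPointIdeal_cremona [DecidableEq σ] (hF : F.IsHomogeneous d)
    (hk : ∀ e ∈ F.support, ∀ i, e i ≤ k) {x : σ → K} (hx : ∀ i, x i ≠ 0) {m : ℕ}
    (hm : F ∈ fatPointIdeal x m) : reflect k F ∈ fatPointIdeal (cremona x) m := by
  obtain ⟨c, hc, hcx⟩ := exists_cremona_cremona_eq_smul hx
  refine reflect_mem_fatPointIdeal hF hk (fun i => ?_) (hcx ▸ mem_fatPointIdeal_smul hF hm hc)
  exact cremona_ne_zero hx i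

end Cremona

section QuadraticTransformation

variable {σ τ : Type*} [Fintype σ]

theorem add_le_of_mem_support_linSubst {K : Type*} [Field K] {P : Matrix σ σ K}
    {F : MvPolynomial σ K} {d a : ℕ} (hF : F.IsHomogeneous d)
    (hP : ∀ i, F ∈ fatPointIdeal (P i) a) {e : σ →₀ ℕ} (he : e ∈ (linSubst P F).support) (i : σ) :
    e i + a ≤ d := by
  classical
  refine add_le_of_mem_fatPointIdeal_single (isHomogeneous_linSubst P hF)
    (linSubst_mem_fatPointIdeal ?_) he
  rw [Matrix.single_one_vecMul]
  exact hP i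

variable [DecidableEq σ]

/-- The points `Q` after the quadratic transformation based at the rows of `P`: the Cremona
transforms of their coordinates with respect to `P`. The adjugate is used in place of the inverse
matrix so that the new coordinates are polynomials in the old ones. -/
def quadTransform {R : Type*} [CommRing R] (P : Matrix σ σ R) (Q : Matrix τ σ R) : Matrix τ σ R :=
  Matrix.of fun i => cremona ((Q * P.adjugate) i)

/-- A polynomial in the coordinates that is nonzero exactly when the rows of `P` are a basis and
no row of `Q` lies on a hyperplane spanned by rows of `P`. -/
def quadDisc {R : Type*} [CommRing R] [Fintype τ] (P : Matrix σ σ R) (Q : Matrix τ σ R) : R :=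
  P.det * ∏ i, ∏ j, (Q * P.adjugate) i j

theorem map_mul_adjugate {R S : Type*} [CommRing R] [CommRing S] (f : R →+* S)
    (P : Matrix σ σ R) (Q : Matrix τ σ R) (i : τ) (j : σ) :
    f ((Q * P.adjugate) i j) = (Q.map f * (P.map f).adjugate) i j := by
  rw [← RingHom.mapMatrix_apply f P, ← RingHom.map_adjugate, RingHom.mapMatrix_apply,
    ← Matrix.map_mul, Matrix.map_apply]

theorem map_quadTransform {R S : Type*} [CommRing R] [CommRing S] (f : R →+* S)
    (P : Matrix σ σ R) (Q : Matrix τ σ R) :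
    (quadTransform P Q).map f = quadTransform (P.map f) (Q.map f) := by
  ext i j
  simp only [Matrix.map_apply, quadTransform, Matrix.of_apply, map_cremona, map_mul_adjugate]

theorem map_quadDisc {R S : Type*} [CommRing R] [CommRing S] [Fintype τ] (f : R →+* S)
    (P : Matrix σ σ R) (Q : Matrix τ σ R) :
    f (quadDisc P Q) = quadDisc (P.map f) (Q.map f) := by
  simp only [quadDisc, map_mul, map_prod, map_mul_adjugate, RingHom.map_det,
    RingHom.mapMatrix_apply]

variable {K : Type*} [Field K] {d d' k a b : ℕ}

/-- No nonzero form of degree `d` has multiplicity at least `a` at the rows of `P` and at least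
`b` at the rows of `Q`. -/
def IsEmptySystem {ι : Type*} (d a b : ℕ) (P : Matrix ι σ K) (Q : Matrix τ σ K) : Prop :=
  ∀ F : MvPolynomial σ K, F.IsHomogeneous d → (∀ i, F ∈ fatPointIdeal (P i) a) →
    (∀ i, F ∈ fatPointIdeal (Q i) b) → F = 0

theorem isEmptySystem_of_lt {P : Matrix σ σ K} (hP : P.det ≠ 0)
    (h : Fintype.card σ * d < Fintype.card σ * a + d) (Q : Matrix τ σ K) :
    IsEmptySystem d a b P Q := by
  intro F hF hPF _
  by_contra hF0
  obtain ⟨e, he⟩ := support_nonempty.2 ((linSubst_injective hP).ne_iff' (map_zero _) |>.2 hF0)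
  have hsum : ∑ i, (e i + a) ≤ ∑ _i : σ, d :=
    Finset.sum_le_sum fun i _ => add_le_of_mem_support_linSubst hF hPF he i
  rw [Finset.sum_add_distrib, ← Finsupp.degree_eq_sum,
    degree_eq_of_mem_support (isHomogeneous_linSubst P hF) he] at hsum
  simp only [Finset.sum_const, Finset.card_univ, smul_eq_mul] at hsum
  omega

theorem linSubst_mem_fatPointIdeal_adjugate {P : Matrix σ σ K} (hP : P.det ≠ 0)
    {F : MvPolynomial σ K} (hF : F.IsHomogeneous d) {x : σ → K} (hx : F ∈ fatPointIdeal x b) :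
    linSubst P F ∈ fatPointIdeal (Matrix.vecMul x P.adjugate) b := by
  apply linSubst_mem_fatPointIdeal
  rw [Matrix.vecMul_vecMul, Matrix.adjugate_mul, Matrix.vecMul_smul, Matrix.vecMul_one]
  exact mem_fatPointIdeal_smul hF hx hP

theorem IsEmptySystem.of_quadTransform [Fintype τ] {P : Matrix σ σ K} {Q : Matrix τ σ K}
    (hPQ : quadDisc P Q ≠ 0) (hk : d ≤ a + k) (hd : d + d' = Fintype.card σ * k)
    (h : IsEmptySystem d' b (d' - k) (quadTransform P Q) (1 : Matrix σ σ K)) :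
    IsEmptySystem d a b P Q := by
  intro F hF hPF hQF
  have hP : P.det ≠ 0 := left_ne_zero_of_mul hPQ
  have hQ (i : τ) (j : σ) : (Q * P.adjugate) i j ≠ 0 :=
    Finset.prod_ne_zero_iff.1 (Finset.prod_ne_zero_iff.1 (right_ne_zero_of_mul hPQ) i
      (Finset.mem_univ i)) j (Finset.mem_univ j)
  have hG := isHomogeneous_linSubst P hF
  have hGk : ∀ e ∈ (linSubst P F).support, ∀ i, e i ≤ k := fun e he i => by
    have := add_le_of_mem_support_linSubst hF hPF he i
    omega
  have hH := isHomogeneous_reflect hG hGk hd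
  refine (map_eq_zero_iff _ (linSubst_injective hP)).1 (eq_zero_of_reflect_eq_zero hGk
    (h _ hH (fun i => ?_) fun i => ?_))
  · exact reflect_mem_fatPointIdeal_cremona hG hGk (hQ i)
      (linSubst_mem_fatPointIdeal_adjugate hP hF (hQF i))
  · have hone : Pi.single i 1 = (1 : Matrix σ σ K) i :=
      (Matrix.vecMul_one _).symm.trans (Matrix.single_one_vecMul i 1)
    rw [← hone]
    refine mem_fatPointIdeal_single hH fun e he => ?_
    have hei := le_of_mem_support_reflect he i
    have hed := (Finsupp.le_degree i e).trans_eq (degree_eq_of_mem_support hH he)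
    omega

end QuadraticTransformation

section SixPoints

variable {R S : Type*} [CommRing R] [CommRing S]

/-- The first three of six points. -/
def firstTriple (p : Matrix (Fin 6) (Fin 3) R) : Matrix (Fin 3) (Fin 3) R :=
  p.submatrix (Fin.castAdd 3) id

/-- The last three of six points. -/
def lastTriple (p : Matrix (Fin 6) (Fin 3) R) : Matrix (Fin 3) (Fin 3) R :=
  p.submatrix (Fin.natAdd 3) id

/-- A polynomial in the coordinates of six points. Where it does not vanish, the quadratic
transformation based at the first three points and then the one based at the images of the last
three are defined at the remaining points, and the second one sends the coordinate points to
noncollinear points. -/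
def sixPointDisc (p : Matrix (Fin 6) (Fin 3) R) : R :=
  let P := quadTransform (firstTriple p) (lastTriple p)
  quadDisc (firstTriple p) (lastTriple p) * quadDisc P (1 : Matrix (Fin 3) (Fin 3) R) *
    (quadTransform P (1 : Matrix (Fin 3) (Fin 3) R)).det

theorem map_sixPointDisc (f : R →+* S) (p : Matrix (Fin 6) (Fin 3) R) :
    f (sixPointDisc p) = sixPointDisc (p.map f) := by
  have hone : (1 : Matrix (Fin 3) (Fin 3) R).map f = 1 :=
    Matrix.map_one f f.map_zero f.map_one
  simp only [sixPointDisc, firstTriple, lastTriple, map_mul, map_quadDisc, map_quadTransform,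
    RingHom.map_det, RingHom.mapMatrix_apply, hone, Matrix.submatrix_map]

theorem exists_sixPointDisc_ne_zero : ∃ p : Matrix (Fin 6) (Fin 3) ℤ, sixPointDisc p ≠ 0 :=
  ⟨!![1, 0, 0; 0, 1, 0; 0, 0, 1; 1, 1, 1; 1, -2, -1; 1, -1, -2], by decide⟩

theorem isEmptySystem_of_sixPointDisc_ne_zero {K : Type*} [Field K]
    {p : Matrix (Fin 6) (Fin 3) K} (hp : sixPointDisc p ≠ 0) {d m : ℕ} (h : 5 * d < 12 * m) :
    IsEmptySystem d m m (firstTriple p) (lastTriple p) := by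
  have hdisc := left_ne_zero_of_mul hp
  have hP := left_ne_zero_of_mul hdisc
  by_cases hd : 2 * d < 3 * m
  · exact isEmptySystem_of_lt (left_ne_zero_of_mul hP) (by rw [Fintype.card_fin]; omega) _
  refine .of_quadTransform hP (k := d - m) (d' := 2 * d - 3 * m) (by omega)
    (by rw [Fintype.card_fin]; omega) ?_
  have hP' := right_ne_zero_of_mul hdisc
  by_cases hd' : 4 * d < 9 * m
  · exact isEmptySystem_of_lt (left_ne_zero_of_mul hP') (by rw [Fintype.card_fin]; omega) _
  refine .of_quadTransform hP' (k := 2 * d - 4 * m) (d' := 4 * d - 9 * m) (by omega)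
    (by rw [Fintype.card_fin]; omega) ?_
  exact isEmptySystem_of_lt (right_ne_zero_of_mul hp) (by rw [Fintype.card_fin]; omega) _

end SixPoints

section Genericity

variable {k l d : ℕ} {Q Q' : (Fin k → Fin 3 → ℂ) → Prop}

theorem mem_linSys {p : Fin k → Fin 3 → ℂ} {m : Fin k → ℕ} {F : MvPolynomial (Fin 3) ℂ} :
    F ∈ linSys p d m ↔ F.IsHomogeneous d ∧
      ∀ i, ∀ ν : Fin 3 → ℕ, ν 0 + ν 1 + ν 2 < m i → aeval (p i) (mderiv ν F) = 0 := by
  simp [linSys]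

theorem linSys_le_comp (p : Fin k → Fin 3 → ℂ) (m : Fin k → ℕ) (f : Fin l → Fin k) :
    linSys p d m ≤ linSys (p ∘ f) d (m ∘ f) := fun _ hF =>
  have ⟨hF, hm⟩ := mem_linSys.1 hF
  mem_linSys.2 ⟨hF, fun i => hm (f i)⟩

theorem projDim_eq_neg_one {p : Fin k → Fin 3 → ℂ} {m : Fin k → ℕ} (h : linSys p d m = ⊥) :
    projDim p d m = -1 := by
  rw [projDim, h, finrank_bot]
  norm_num

theorem Generically.mono (hQ : Generically k Q) (h : ∀ p, Q p → Q' p) : Generically k Q' :=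
  have ⟨P, hP, hgen⟩ := hQ
  ⟨P, hP, fun p hp0 hp => h p (hgen p hp0 hp)⟩

theorem Generically.comp_injective {Q : (Fin l → Fin 3 → ℂ) → Prop} (hQ : Generically l Q)
    {f : Fin l → Fin k} (hf : Function.Injective f) : Generically k fun p => Q (p ∘ f) := by
  obtain ⟨P, hP, hgen⟩ := hQ
  refine ⟨rename (Prod.map f id) P, (map_ne_zero_iff _
    (rename_injective _ (hf.prodMap Function.injective_id))).2 hP, fun p hp0 hp => ?_⟩
  rw [eval_rename] at hp
  exact hgen _ (fun i => hp0 (f i)) hp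

theorem generically_sixPointDisc_ne_zero : Generically 6 fun p => sixPointDisc p ≠ 0 := by
  have heval (p : Fin 6 → Fin 3 → ℂ) : eval (fun x => p x.1 x.2)
      (sixPointDisc (Matrix.mvPolynomialX (Fin 6) (Fin 3) ℂ)) = sixPointDisc p := by
    rw [map_sixPointDisc]
    exact congrArg sixPointDisc (Matrix.mvPolynomialX_map_eval₂ (RingHom.id ℂ) p)
  refine ⟨_, fun hzero => ?_, fun p _ hp => by rwa [heval] at hp⟩
  obtain ⟨p, hp⟩ := exists_sixPointDisc_ne_zero
  have hpℂ := heval (p.map (Int.castRingHom ℂ))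
  rw [hzero, map_zero, ← map_sixPointDisc] at hpℂ
  exact hp (Int.cast_eq_zero.1 hpℂ.symm)

end Genericity

theorem empty_L_14_six_points_general {d m : ℕ} (h : 5 * d < 12 * m) :
    Generically 6 (fun p => projDim p d (fun _ : Fin 6 => m) = -1) ∧
    ∀ m0 : ℕ, Generically 7 (fun p => projDim p d (fun i => if i = 0 then m0 else m) = -1) := by
  have hsix : Generically 6 fun p => linSys p d (fun _ => m) = ⊥ := by
    refine generically_sixPointDisc_ne_zero.mono fun p hp => ?_
    refine (Submodule.eq_bot_iff _).2 fun F hF => ?_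
    obtain ⟨hFd, hFm⟩ := mem_linSys.1 hF
    exact isEmptySystem_of_sixPointDisc_ne_zero hp h F hFd
      (fun i => mem_fatPointIdeal_of_aeval_mderiv_eq_zero (hFm _))
      (fun i => mem_fatPointIdeal_of_aeval_mderiv_eq_zero (hFm _))
  refine ⟨hsix.mono fun p => projDim_eq_neg_one, fun m0 => ?_⟩
  refine (hsix.comp_injective (Fin.succ_injective 6)).mono fun p hp => projDim_eq_neg_one ?_
  exact eq_bot_iff.2 ((linSys_le_comp p _ Fin.succ).trans hp.le)

theorem empty_L_14_six_points :
    Generically 6 (fun p => projDim p 14 (fun _ : Fin 6 => 6) = -1) ∧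
    ∀ m0 : ℕ, Generically 7 (fun p => projDim p 14 (qh 6 m0) = -1) :=
  empty_L_14_six_points_general (by norm_num)
end

section
/- For general points, the following quasi-homogeneous systems of multiplicity 6 are non-special, i.e. their dimension equals the virtual dimension: ℓ(L(15, 3, 6^6)) = 3, ℓ(L(16, 2, 6^7)) = 2, ℓ(L(17, 1, 6^8)) = 1, ℓ(L(19, 5, 6^9)) = 5, and ℓ(L(20, 8, 6^9)) = 5. -/
open MvPolynomial

/-!
The forms of degree `d` with the prescribed multiplicities are the kernel of an interpolation
matrix, with one row per derivative of order `mᵢ - 1` at `pᵢ` (Euler's identity takes care of the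
lower orders). The dimension equals the virtual one as soon as the rows are independent, and this is
an open condition on the points, so one good configuration is enough.

The configuration is `pᵢ = p ^ wᵢ` for a prime `p` and weights `wᵢ ∈ ℕ³`. After rescaling rows and
columns by powers of `p`, the entry at the condition `(i, ν)` and the monomial `x ^ α` is the
falling factorial `[α]_ν` times `p ^ (⟨wᵢ, α⟩ - minⱼ ⟨wⱼ, α⟩)`. Modulo `p`, a column `α` at which
`⟨wᵢ, α⟩` is the strict minimum meets only the block of the `i`-th point. Hence the rows are
independent modulo `p`, and so in characteristic zero, if for every `i` the exponents `α` with this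
property (the `i`-th cell of a regular subdivision of the triangle of exponents) impose
independent conditions on the functions `[α]_ν`, `|ν| = mᵢ - 1`; this is a finite computation.
-/

open scoped Matrix

section RowIndependence

variable {K m n : Type*} [Field K]

theorem linearIndependent_row_iff_vecMul [Fintype m] {A : Matrix m n K} :
    LinearIndependent K A.row ↔ ∀ v, v ᵥ* A = 0 → v = 0 := by
  rw [← Matrix.vecMul_injective_iff, ← Matrix.coe_vecMulLinear, ← LinearMap.ker_eq_bot,
    LinearMap.ker_eq_bot']
  rfl

theorem linearIndependent_row_of_mul_eq_mul [Finite m] {A B : Matrix m n K} {a : m → K}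
    {b : n → K} (ha : ∀ i, a i ≠ 0) (hb : ∀ j, b j ≠ 0) (h : ∀ i j, a i * A i j = B i j * b j)
    (hB : LinearIndependent K B.row) : LinearIndependent K A.row := by
  cases nonempty_fintype m
  rw [linearIndependent_row_iff_vecMul] at hB ⊢
  intro v hv
  have hdiv : (fun i => v i / a i) = 0 := by
    refine hB _ (_root_.funext fun j => (mul_eq_zero_iff_right (hb j)).1 ?_)
    calc
      (∑ i, v i / a i * B i j) * b j = ∑ i, v i * A i j := by
        rw [Finset.sum_mul]
        refine Finset.sum_congr rfl fun i _ => ?_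
        rw [mul_assoc, ← h, div_mul_eq_mul_div, mul_left_comm, mul_div_cancel_left₀ _ (ha i)]
      _ = 0 := congrFun hv j
  exact _root_.funext fun i => (div_eq_zero_iff.1 (congrFun hdiv i)).resolve_right (ha i)

theorem mulVec_surjective_of_linearIndependent_row [Finite m] [Fintype n] {A : Matrix m n K}
    (hA : LinearIndependent K A.row) : Function.Surjective A.mulVec := by
  cases nonempty_fintype m
  rw [← Matrix.coe_mulVecLin, ← LinearMap.range_eq_top]
  apply Submodule.eq_top_of_finrank_eq
  rw [Module.finrank_fintype_fun_eq_card]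
  exact hA.rank_matrix

theorem finrank_ker_mulVecLin_add_card [Fintype m] [Fintype n] {A : Matrix m n K}
    (hA : LinearIndependent K A.row) :
    Module.finrank K (LinearMap.ker A.mulVecLin) + Fintype.card m = Fintype.card n := by
  have hrange : LinearMap.range A.mulVecLin = ⊤ :=
    LinearMap.range_eq_top.2 (mulVec_surjective_of_linearIndependent_row hA)
  have hrank := A.mulVecLin.finrank_range_add_finrank_ker
  rwa [hrange, finrank_top, Module.finrank_fintype_fun_eq_card,
    Module.finrank_fintype_fun_eq_card, add_comm] at hrank

variable {R : Type*} [CommRing R] {φ : R →+* K} {A : Matrix m n R}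

theorem linearIndependent_row_map_of_map_det_ne_zero [Fintype m] [DecidableEq m] [Fintype n]
    {Y : Matrix n m R} (h : φ (A * Y).det ≠ 0) : LinearIndependent K (A.map φ).row := by
  rw [φ.map_det, RingHom.mapMatrix_apply, Matrix.map_mul] at h
  refine linearIndependent_row_iff_vecMul.2 fun v hv => Matrix.eq_zero_of_vecMul_eq_zero h ?_
  rw [← Matrix.vecMul_vecMul, hv, Matrix.zero_vecMul]

-- The witness is the determinant of `A * Y`, where `Y` lifts a right inverse of `A.map φ`.
theorem exists_forall_linearIndependent_row_map [Finite m] [Finite n]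
    (hφ : Function.Surjective φ) (hA : LinearIndependent K (A.map φ).row) :
    ∃ a : R, φ a ≠ 0 ∧ ∀ {L : Type*} [Field L] (ψ : R →+* L), ψ a ≠ 0 →
      LinearIndependent L (A.map ψ).row := by
  classical
  cases nonempty_fintype m
  cases nonempty_fintype n
  obtain ⟨Z, hZ⟩ := Matrix.mulVec_surjective_iff_exists_right_inverse.1
    (mulVec_surjective_of_linearIndependent_row hA)
  choose lift hlift using hφ
  have hlift_map : (Z.map lift).map φ = Z := by
    ext
    simp [hlift]
  refine ⟨(A * Z.map lift).det, ?_, fun _ => linearIndependent_row_map_of_map_det_ne_zero⟩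
  rw [φ.map_det, RingHom.mapMatrix_apply, Matrix.map_mul, hlift_map, hZ, Matrix.det_one]
  exact one_ne_zero

end RowIndependence

section Elimination

variable {K : Type*} [CommRing K]

/-- The standard pairing `∑ᵢ μᵢ vᵢ` of two lists of the same length. -/
def listDot (μ v : List K) : K := (List.zipWith (· * ·) μ v).sum

theorem listDot_cons (a x : K) (μ v : List K) :
    listDot (a :: μ) (x :: v) = a * x + listDot μ v := by
  simp only [listDot, List.zipWith_cons_cons, List.sum_cons]

theorem listDot_zipWith_sub (x y : K) (μ : List K) {u v : List K} (h : u.length = v.length) :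
    listDot μ (List.zipWith (fun b c => x * c - y * b) v u) =
      x * listDot μ u - y * listDot μ v := by
  induction μ generalizing u v with
  | nil => simp [listDot]
  | cons a μ ih =>
    match u, v, h with
    | [], [], _ => simp [listDot]
    | c :: u, b :: v, h =>
      simp only [List.zipWith_cons_cons, listDot_cons, ih (Nat.succ_injective h)]
      ring

theorem listDot_eq_zero {μ : List K} (hμ : ∀ a ∈ μ, a = 0) (v : List K) : listDot μ v = 0 := by
  refine List.sum_eq_zero fun c hc => ?_
  obtain ⟨i, hi, rfl⟩ := List.mem_iff_getElem.1 hc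
  rw [List.getElem_zipWith, hμ _ (List.getElem_mem _), zero_mul]

variable [DecidableEq K]

/-- One step of fraction-free Gaussian elimination: the row `u` with its leading entry cleared by
the pivot row `v`, and that entry dropped. -/
def eliminate : List K → List K → List K
  | x :: v, y :: u => if y = 0 then u else List.zipWith (fun b c => x * c - y * b) v u
  | _, _ => []

/-- The Gaussian elimination test for whether rows of length `n` span the space of all such
rows. -/
def rowsSpan : ℕ → List (List K) → Bool
  | 0, _ => true
  | n + 1, rows =>
    match rows.find? (fun v => v.headD 0 ≠ 0) with
    | none => false
    | some v => rowsSpan n (rows.map (eliminate v))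

theorem length_eliminate {n : ℕ} {u v : List K} (hv : v.length = n + 1) (hu : u.length = n + 1) :
    (eliminate v u).length = n := by
  match v, u, hv, hu with
  | x :: v, y :: u, hv, hu =>
    rw [eliminate]
    split_ifs
    · exact Nat.succ_injective hu
    · rw [List.length_zipWith, Nat.succ_injective hv, Nat.succ_injective hu, min_self]

theorem listDot_eliminate {a : K} {μ u v : List K} (h : u.length = v.length)
    (hv : listDot (a :: μ) v = 0) (hu : listDot (a :: μ) u = 0) :
    listDot μ (eliminate v u) = 0 := by
  match v, u, h with
  | [], [], _ => simp [eliminate, listDot]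
  | x :: v, y :: u, h =>
    rw [listDot_cons] at hu hv
    rw [eliminate]
    split_ifs with hy
    · rwa [hy, mul_zero, zero_add] at hu
    · rw [listDot_zipWith_sub _ _ _ (Nat.succ_injective h)]
      linear_combination x * hu - y * hv

theorem eq_zero_of_rowsSpan [IsDomain K] {n : ℕ} {rows : List (List K)}
    (hlen : ∀ v ∈ rows, v.length = n) (hspan : rowsSpan n rows) {μ : List K}
    (hμ : μ.length = n) (h0 : ∀ v ∈ rows, listDot μ v = 0) : ∀ a ∈ μ, a = 0 := by
  induction n generalizing rows μ with
  | zero => simp [List.length_eq_zero_iff.1 hμ]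
  | succ n ih =>
    obtain ⟨a, μ, rfl⟩ := List.exists_cons_of_length_eq_add_one hμ
    rw [rowsSpan] at hspan
    split at hspan
    case h_1 => contradiction
    case h_2 v hv =>
      have hv_mem := List.mem_of_find?_eq_some hv
      have hμ0 : ∀ b ∈ μ, b = 0 := by
        refine ih ?_ hspan (Nat.succ_injective hμ) ?_ <;> rw [List.forall_mem_map]
        · exact fun u hu => length_eliminate (hlen v hv_mem) (hlen u hu)
        · exact fun u hu => listDot_eliminate ((hlen u hu).trans (hlen v hv_mem).symm)
            (h0 v hv_mem) (h0 u hu)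
      obtain ⟨x, v, rfl⟩ := List.exists_cons_of_length_eq_add_one (hlen v hv_mem)
      have hx : x ≠ 0 := by simpa using List.find?_some hv
      have hax : a * x = 0 := by
        simpa only [listDot_cons, listDot_eq_zero hμ0, add_zero] using h0 _ hv_mem
      exact List.forall_mem_cons.2 ⟨(mul_eq_zero.1 hax).resolve_right hx, hμ0⟩

end Elimination

section Derivatives

theorem pderiv_pow_monomial {σ R : Type*} [CommSemiring R] (j : σ) (l : ℕ) (s : σ →₀ ℕ) (a : R) :
    ((pderiv (R := R) j).toLinearMap ^ l) (monomial s a) =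
      monomial (s - Finsupp.single j l) (a * (s j).descFactorial l) := by
  induction l with
  | zero => simp
  | succ l ih =>
    rw [pow_succ', Module.End.mul_apply, ih, Derivation.coeFn_coe, pderiv_monomial, tsub_tsub,
      ← Finsupp.single_add, Nat.descFactorial_succ, Finsupp.tsub_apply, Finsupp.single_eq_same]
    push_cast
    rw [mul_assoc, mul_comm (Nat.cast (s j - l))]

theorem isHomogeneous_pderiv_pow {σ R : Type*} [CommSemiring R] {f : MvPolynomial σ R} {d : ℕ}
    (hf : f.IsHomogeneous d) (j : σ) (l : ℕ) :
    (((pderiv (R := R) j).toLinearMap ^ l) f).IsHomogeneous (d - l) := by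
  induction l with
  | zero => exact hf
  | succ l ih =>
    rw [pow_succ', Module.End.mul_apply, ← Nat.sub_sub]
    exact ih.pderiv

/-- The multi-index falling factorial `∏ⱼ αⱼ (αⱼ - 1) ⋯ (αⱼ - νⱼ + 1)`, which is the coefficient
of the `ν`-th derivative of the monomial `x ^ α`. -/
def multiDescFactorial (α ν : Fin 3 → ℕ) : ℕ :=
  (α 0).descFactorial (ν 0) * (α 1).descFactorial (ν 1) * (α 2).descFactorial (ν 2)

theorem multiDescFactorial_eq_zero {α ν : Fin 3 → ℕ} (h : ¬ν ≤ α) :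
    multiDescFactorial α ν = 0 := by
  simpa [multiDescFactorial, Pi.le_def, Fin.forall_fin_succ, Nat.descFactorial_eq_zero_iff_lt,
    or_assoc, imp_iff_not_or] using h

theorem multiDescFactorial_add_single (α ν : Fin 3 → ℕ) (j : Fin 3) :
    multiDescFactorial α (ν + Pi.single j 1) = multiDescFactorial α ν * (α j - ν j) := by
  fin_cases j <;> simp [multiDescFactorial, Nat.descFactorial_succ] <;> ring

theorem mderiv_monomial (ν : Fin 3 → ℕ) (s : Fin 3 →₀ ℕ) (a : ℂ) :
    mderiv ν (monomial s a) =
      monomial (s - Finsupp.equivFunOnFinite.symm ν) (a * multiDescFactorial s ν) := by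
  have hexp : s - Finsupp.single 2 (ν 2) - Finsupp.single 1 (ν 1) - Finsupp.single 0 (ν 0) =
      s - Finsupp.equivFunOnFinite.symm ν := by
    ext j
    fin_cases j <;> simp
  simp only [mderiv, LinearMap.comp_apply, pderiv_pow_monomial, hexp]
  congr 1
  simp [multiDescFactorial]
  ring

theorem pderiv_mderiv (j : Fin 3) (ν : Fin 3 → ℕ) (f : MvPolynomial (Fin 3) ℂ) :
    pderiv j (mderiv ν f) = mderiv (ν + Pi.single j 1) f := by
  induction f using MvPolynomial.induction_on' with
  | add f g hf hg => simp only [map_add, hf, hg]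
  | monomial s a =>
    rw [mderiv_monomial, mderiv_monomial, pderiv_monomial, tsub_tsub,
      multiDescFactorial_add_single]
    congr 1
    · congr 2
      ext k
      fin_cases j <;> fin_cases k <;> simp
    · simp [mul_assoc]

theorem isHomogeneous_mderiv {d : ℕ} {f : MvPolynomial (Fin 3) ℂ} (hf : f.IsHomogeneous d)
    (ν : Fin 3 → ℕ) : (mderiv ν f).IsHomogeneous (d - (ν 0 + ν 1 + ν 2)) := by
  have hdegree : d - ν 2 - ν 1 - ν 0 = d - (ν 0 + ν 1 + ν 2) := by omega
  rw [← hdegree]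
  exact isHomogeneous_pderiv_pow
    (isHomogeneous_pderiv_pow (isHomogeneous_pderiv_pow hf 2 _) 1 _) 0 _

theorem aeval_mderiv_eq_zero_of_order_eq {d e : ℕ} (he : e ≤ d) {f : MvPolynomial (Fin 3) ℂ}
    (hf : f.IsHomogeneous d) {q : Fin 3 → ℂ}
    (h : ∀ ν : Fin 3 → ℕ, ν 0 + ν 1 + ν 2 = e → aeval q (mderiv ν f) = 0)
    {ν : Fin 3 → ℕ} (hν : ν 0 + ν 1 + ν 2 ≤ e) : aeval q (mderiv ν f) = 0 := by
  obtain ⟨t, ht⟩ := Nat.exists_eq_add_of_le hν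
  induction t generalizing ν with
  | zero => exact h ν ht.symm
  | succ t ih =>
    have hpderiv (j : Fin 3) : aeval q (pderiv j (mderiv ν f)) = 0 := by
      rw [pderiv_mderiv]
      apply ih <;> fin_cases j <;> simp <;> omega
    have euler := congrArg (aeval q) (isHomogeneous_mderiv hf ν).sum_X_mul_pderiv
    simp only [map_sum, map_mul, hpderiv, mul_zero, Finset.sum_const_zero, map_nsmul] at euler
    exact (smul_eq_zero.1 euler.symm).resolve_left (by omega)

end Derivatives

section Forms

/-- The exponents of the monomials of degree `d` in three variables; also the multi-indices of the
derivatives of order `d`. -/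
abbrev Exponent (d : ℕ) : Type := {α : Fin 3 → ℕ // α ∈ Finset.Nat.antidiagonalTuple 3 d}

theorem Exponent.sum_eq {d : ℕ} (α : Exponent d) : ∑ j, α.1 j = d :=
  Finset.Nat.mem_antidiagonalTuple.1 α.2

theorem card_exponent (d : ℕ) : Fintype.card (Exponent d) = (d + 2).choose 2 := by
  have e : Exponent d ≃ Sym (Fin 3) d :=
    (Equiv.subtypeEquivRight fun _ => Finset.Nat.mem_antidiagonalTuple).trans
      (Sym.equivNatSumOfFintype (Fin 3) d).symm
  rw [Fintype.card_congr e, Sym.card_sym_eq_choose, Fintype.card_fin, ← Nat.choose_symm_add]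
  congr 1
  omega

theorem sum_exponent {M : Type*} [AddCommMonoid M] (e : ℕ) (f : (Fin 3 → ℕ) → M) :
    ∑ α : Exponent e, f α = ((List.Nat.antidiagonalTuple 3 e).map f).sum := by
  rw [Finset.sum_coe_sort (Finset.Nat.antidiagonalTuple 3 e) f]
  rfl

variable {R : Type*} [CommSemiring R] {d : ℕ}

/-- The form of degree `d` with given coefficients. -/
noncomputable def formOfCoeffs (d : ℕ) : (Exponent d → R) →ₗ[R] MvPolynomial (Fin 3) R :=
  Fintype.linearCombination R fun α : Exponent d => monomial (Finsupp.equivFunOnFinite.symm α.1) 1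

theorem formOfCoeffs_apply (c : Exponent d → R) :
    formOfCoeffs d c = ∑ α, monomial (Finsupp.equivFunOnFinite.symm α.1) (c α) := by
  simp only [formOfCoeffs, Fintype.linearCombination_apply, smul_monomial, smul_eq_mul, mul_one]

theorem coeff_formOfCoeffs (c : Exponent d → R) (α : Exponent d) :
    coeff (Finsupp.equivFunOnFinite.symm α.1) (formOfCoeffs d c) = c α := by
  classical
  simp [formOfCoeffs_apply, coeff_monomial, coeff_sum]

theorem formOfCoeffs_injective (d : ℕ) :
    Function.Injective (formOfCoeffs (R := R) d) := fun c c' h =>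
  _root_.funext fun α => by rw [← coeff_formOfCoeffs c, h, coeff_formOfCoeffs]

theorem isHomogeneous_formOfCoeffs (c : Exponent d → R) : (formOfCoeffs d c).IsHomogeneous d := by
  rw [formOfCoeffs_apply]
  refine IsHomogeneous.sum _ _ _ fun α _ => isHomogeneous_monomial _ ?_
  rw [Finsupp.degree_eq_sum]
  exact α.sum_eq

theorem range_formOfCoeffs :
    LinearMap.range (formOfCoeffs (R := R) d) = homogeneousSubmodule (Fin 3) R d := by
  refine le_antisymm ?_ fun f hf => ?_
  · rintro _ ⟨c, rfl⟩
    exact isHomogeneous_formOfCoeffs c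
  · let c : Exponent d → R := fun α => coeff (Finsupp.equivFunOnFinite.symm α.1) f
    refine ⟨c, ?_⟩
    ext s
    by_cases hs : s.degree = d
    · have hs_mem : (s : Fin 3 → ℕ) ∈ Finset.Nat.antidiagonalTuple 3 d := by
        rwa [Finset.Nat.mem_antidiagonalTuple, ← Finsupp.degree_eq_sum]
      simpa [c] using coeff_formOfCoeffs c ⟨s, hs_mem⟩
    · rw [(isHomogeneous_formOfCoeffs c).coeff_eq_zero hs, IsHomogeneous.coeff_eq_zero hf hs]

end Forms

section Conditions

variable {k : ℕ}

/-- The linear conditions cutting out `linSys p d m` among the forms of degree `d`: by Euler's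
identity only the derivatives of order `m i - 1` at the `i`-th point are needed. A multiplicity
`m i = 0` would wrongly contribute one condition. -/
abbrev Condition (m : Fin k → ℕ) : Type := (i : Fin k) × Exponent (m i - 1)

/-- The interpolation matrix of the points `q i` with multiplicities `m i`, whose entries are the
values of the derivatives of the monomials of degree `d`. -/
def condMatrix {A : Type*} [CommSemiring A] (q : Fin k → Fin 3 → A) (d : ℕ) (m : Fin k → ℕ) :
    Matrix (Condition m) (Exponent d) A :=
  Matrix.of fun r α => multiDescFactorial α r.2 * ∏ j, q r.1 j ^ (α.1 j - r.2.1 j)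

theorem condMatrix_map {A B : Type*} [CommSemiring A] [CommSemiring B] (φ : A →+* B)
    (q : Fin k → Fin 3 → A) (d : ℕ) (m : Fin k → ℕ) :
    (condMatrix q d m).map φ = condMatrix (fun i j => φ (q i j)) d m := by
  ext
  simp [condMatrix]

variable {d : ℕ} {m : Fin k → ℕ}

theorem aeval_mderiv_formOfCoeffs (q : Fin k → Fin 3 → ℂ) (c : Exponent d → ℂ)
    (r : Condition m) :
    aeval (q r.1) (mderiv r.2 (formOfCoeffs d c)) = (condMatrix q d m *ᵥ c) r := by
  rw [formOfCoeffs_apply, map_sum, map_sum]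
  refine Finset.sum_congr rfl fun α _ => ?_
  rw [mderiv_monomial, aeval_monomial, Finsupp.prod_fintype _ _ fun _ => pow_zero _]
  simp [condMatrix]
  ring

theorem linSys_eq_map_ker (q : Fin k → Fin 3 → ℂ) (hm : ∀ i, 1 ≤ m i ∧ m i ≤ d + 1) :
    linSys q d m = (LinearMap.ker (condMatrix q d m).mulVecLin).map (formOfCoeffs d) := by
  ext f
  simp only [linSys, ← range_formOfCoeffs, Submodule.mem_inf, Submodule.mem_iInf,
    LinearMap.mem_ker, Submodule.mem_map, LinearMap.comp_apply, Matrix.mulVecLin_apply]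
  constructor
  · rintro ⟨⟨c, rfl⟩, hvanish⟩
    refine ⟨c, _root_.funext fun r => ?_, rfl⟩
    rw [← aeval_mderiv_formOfCoeffs]
    have horder := r.2.sum_eq
    rw [Fin.sum_univ_three] at horder
    have := (hm r.1).1
    exact hvanish r.1 r.2 (by omega)
  · rintro ⟨c, hc, rfl⟩
    refine ⟨⟨c, rfl⟩, fun i ν hν => ?_⟩
    refine aeval_mderiv_eq_zero_of_order_eq (Nat.sub_le_of_le_add (hm i).2)
      (isHomogeneous_formOfCoeffs c) (fun μ hμ => ?_) (Nat.le_sub_one_of_lt hν)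
    have hμ_mem : μ ∈ Finset.Nat.antidiagonalTuple 3 (m i - 1) := by
      rwa [Finset.Nat.mem_antidiagonalTuple, Fin.sum_univ_three]
    exact (aeval_mderiv_formOfCoeffs q c ⟨i, μ, hμ_mem⟩).trans (congrFun hc _)

theorem virtDim_eq_card_sub_card (d : ℕ) (hm : ∀ i, 1 ≤ m i) :
    virtDim d m = (Fintype.card (Exponent d) : ℤ) - Fintype.card (Condition m) - 1 := by
  have hd : (d : ℤ) * (d + 3) / 2 = (d + 2).choose 2 - 1 := by
    have hprod : (d + 2) * (d + 1) = d * (d + 3) + 2 := by ring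
    rw [Nat.choose_two_right, Nat.add_succ_sub_one, hprod]
    push_cast
    omega
  have hmi (i : Fin k) : (m i : ℤ) * (m i + 1) / 2 = Fintype.card (Exponent (m i - 1)) := by
    rw [card_exponent, ← Nat.sub_add_comm (hm i), Nat.add_succ_sub_one,
      Nat.choose_two_right, Nat.add_sub_cancel, mul_comm]
    push_cast
    rfl
  simp only [virtDim, hd, hmi, Fintype.card_sigma, Nat.cast_sum, card_exponent d]
  ring

theorem projDim_eq_virtDim {q : Fin k → Fin 3 → ℂ} (hm : ∀ i, 1 ≤ m i ∧ m i ≤ d + 1)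
    (hq : LinearIndependent ℂ (condMatrix q d m).row) : projDim q d m = virtDim d m := by
  have hrank := finrank_ker_mulVecLin_add_card hq
  rw [(Submodule.equivMapOfInjective _ (formOfCoeffs_injective d) _).finrank_eq,
    ← linSys_eq_map_ker q hm] at hrank
  rw [projDim, virtDim_eq_card_sub_card d fun i => (hm i).1]
  omega

theorem generically_projDim_eq_virtDim {q : Fin k → Fin 3 → ℂ} (hm : ∀ i, 1 ≤ m i ∧ m i ≤ d + 1)
    (hq : LinearIndependent ℂ (condMatrix q d m).row) :
    Generically k fun p => projDim p d m = virtDim d m := by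
  let A := condMatrix (fun i j => (X (i, j) : MvPolynomial (Fin k × Fin 3) ℂ)) d m
  have hA (p : Fin k → Fin 3 → ℂ) : A.map (eval fun x => p x.1 x.2) = condMatrix p d m := by
    simp only [A, condMatrix_map, eval_X]
  obtain ⟨P, hP, hind⟩ := exists_forall_linearIndependent_row_map (A := A)
    (φ := eval fun x => q x.1 x.2) (fun a => ⟨C a, eval_C a⟩) (by rwa [hA])
  refine ⟨P, fun h => hP (by rw [h, map_zero]), fun p _ hp => projDim_eq_virtDim hm ?_⟩
  simpa only [hA] using hind (eval fun x => p x.1 x.2) hp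

end Conditions

section Unisolvence

/-- The falling factorials `[α]_ν` with `|ν| = e` are linearly independent as functions on `S`.
On exponents `α` of a fixed degree `d ≥ e`, these functions span the polynomials of degree at most
`e` in characteristic zero. -/
def IsUnisolvent (K : Type*) [CommSemiring K] (e : ℕ) (S : List (Fin 3 → ℕ)) : Prop :=
  ∀ μ : Exponent e → K, (∀ α ∈ S, ∑ ν, μ ν * multiDescFactorial α ν = 0) → μ = 0

/-- A decision procedure for `IsUnisolvent`, by Gaussian elimination. -/
def unisolventTest (K : Type*) [CommRing K] [DecidableEq K] (e : ℕ) (S : List (Fin 3 → ℕ)) :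
    Bool :=
  rowsSpan (List.Nat.antidiagonalTuple 3 e).length
    (S.map fun α => (List.Nat.antidiagonalTuple 3 e).map fun ν => (multiDescFactorial α ν : K))

theorem isUnisolvent_of_unisolventTest {K : Type*} [CommRing K] [IsDomain K] [DecidableEq K]
    {e : ℕ} {S : List (Fin 3 → ℕ)} (h : unisolventTest K e S) : IsUnisolvent K e S := by
  intro μ hμ
  obtain ⟨μ, rfl⟩ : ∃ μ' : (Fin 3 → ℕ) → K, (fun ν : Exponent e => μ' ν) = μ :=
    Subtype.val_injective.surjective_comp_right μ
  have hzero := eq_zero_of_rowsSpan (μ := (List.Nat.antidiagonalTuple 3 e).map μ)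
    (List.forall_mem_map.2 fun _ _ => List.length_map _) h (List.length_map _)
    (List.forall_mem_map.2 fun α hα => ?_)
  · exact _root_.funext fun ν => hzero _ (List.mem_map_of_mem ν.2)
  · rw [listDot, List.zipWith_map, List.zipWith_self,
      ← sum_exponent e fun ν => μ ν * multiDescFactorial α ν]
    exact hμ α hα

end Unisolvence

section Degeneration

/-- The pairing of a weight vector with an exponent, i.e. the `p`-adic valuation of the monomial
`x ^ α` at the point `p ^ w`. -/
def weight (w α : Fin 3 → ℕ) : ℕ := w 0 * α 0 + w 1 * α 1 + w 2 * α 2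

theorem prod_pow_mul_pow_weight {A : Type*} [CommSemiring A] (a : A) (w : Fin 3 → ℕ)
    {α ν : Fin 3 → ℕ} (h : ν ≤ α) :
    a ^ weight w ν * ∏ j, (a ^ w j) ^ (α j - ν j) = a ^ weight w α := by
  have hweight : weight w ν + weight w (α - ν) = weight w α := by
    nth_rw 2 [← add_tsub_cancel_of_le h]
    simp only [weight, Pi.add_apply]
    ring
  rw [← hweight, pow_add, Fin.prod_univ_three]
  simp only [weight, Pi.sub_apply, pow_add, pow_mul]

variable {k : ℕ}

/-- The tropical polynomial `minᵢ ⟨wᵢ, α⟩`, with the junk value `0` for `k = 0`. -/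
noncomputable def minWeight (w : Fin k → Fin 3 → ℕ) (α : Fin 3 → ℕ) : ℕ := ⨅ i, weight (w i) α

theorem minWeight_le (w : Fin k → Fin 3 → ℕ) (α : Fin 3 → ℕ) (i : Fin k) :
    minWeight w α ≤ weight (w i) α :=
  ciInf_le' _ i

/-- The exponents of degree `d` at which the `i`-th weight is strictly smaller than the others. -/
def cell (w : Fin k → Fin 3 → ℕ) (d : ℕ) (i : Fin k) : List (Fin 3 → ℕ) :=
  (List.Nat.antidiagonalTuple 3 d).filter fun α =>
    ∀ j, i ≠ j → weight (w i) α < weight (w j) α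

theorem mem_cell {w : Fin k → Fin 3 → ℕ} {d : ℕ} {i : Fin k} {α : Fin 3 → ℕ} :
    α ∈ cell w d i ↔ α ∈ Finset.Nat.antidiagonalTuple 3 d ∧
      ∀ j, i ≠ j → weight (w i) α < weight (w j) α := by
  rw [cell, List.mem_filter, decide_eq_true_iff]
  rfl

theorem minWeight_eq_of_mem_cell {w : Fin k → Fin 3 → ℕ} {d : ℕ} {i : Fin k} {α : Fin 3 → ℕ}
    (hα : α ∈ cell w d i) : minWeight w α = weight (w i) α := by
  have : Nonempty (Fin k) := ⟨i⟩
  refine le_antisymm (minWeight_le w α i) (le_ciInf fun j => ?_)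
  obtain rfl | hij := eq_or_ne i j
  · exact le_rfl
  · exact ((mem_cell.1 hα).2 j hij).le

/-- The interpolation matrix of the points `p ^ w i` after rescaling each row by `p ^ ⟨wᵢ, ν⟩` and
each column by `p ^ (-minᵢ ⟨wᵢ, α⟩)`. -/
noncomputable def degenMatrix (p : ℕ) (w : Fin k → Fin 3 → ℕ) (d : ℕ) (m : Fin k → ℕ) :
    Matrix (Condition m) (Exponent d) ℤ :=
  Matrix.of fun r α => multiDescFactorial α r.2 * p ^ (weight (w r.1) α - minWeight w α)

theorem pow_weight_mul_condMatrix (p : ℕ) (w : Fin k → Fin 3 → ℕ) {d : ℕ} {m : Fin k → ℕ}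
    (r : Condition m) (α : Exponent d) :
    (p : ℂ) ^ weight (w r.1) r.2 * condMatrix (fun i j => (p : ℂ) ^ w i j) d m r α =
      (degenMatrix p w d m).map (Int.castRingHom ℂ) r α * (p : ℂ) ^ minWeight w α := by
  by_cases hle : r.2.1 ≤ α.1
  · simp only [condMatrix, degenMatrix, Matrix.of_apply, Matrix.map_apply, eq_intCast]
    push_cast
    rw [mul_left_comm, prod_pow_mul_pow_weight _ _ hle, mul_assoc, ← pow_add,
      Nat.sub_add_cancel (minWeight_le w α r.1)]
  · simp [condMatrix, degenMatrix, multiDescFactorial_eq_zero hle]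

theorem degenMatrix_map_apply_of_mem_cell (p : ℕ) {w : Fin k → Fin 3 → ℕ} {d : ℕ} {m : Fin k → ℕ}
    {i : Fin k} {α : Exponent d} (hα : α.1 ∈ cell w d i) (r : Condition m) :
    (degenMatrix p w d m).map (Int.castRingHom (ZMod p)) r α =
      if r.1 = i then (multiDescFactorial α r.2 : ZMod p) else 0 := by
  simp only [degenMatrix, Matrix.of_apply, Matrix.map_apply, minWeight_eq_of_mem_cell hα]
  split_ifs with hr
  · simp [hr]
  · have := Nat.sub_ne_zero_of_lt ((mem_cell.1 hα).2 r.1 (Ne.symm hr))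
    simp [this]

theorem linearIndependent_row_degenMatrix_map {p : ℕ} [Fact p.Prime] {w : Fin k → Fin 3 → ℕ}
    {d : ℕ} {m : Fin k → ℕ} (h : ∀ i, IsUnisolvent (ZMod p) (m i - 1) (cell w d i)) :
    LinearIndependent (ZMod p) ((degenMatrix p w d m).map (Int.castRingHom (ZMod p))).row := by
  refine linearIndependent_row_iff_vecMul.2 fun v hv => ?_
  have hblock (i : Fin k) : (fun ν => v ⟨i, ν⟩) = 0 := by
    refine h i _ fun α hα => ?_
    lift α to Exponent d using (mem_cell.1 hα).1
    have hcol := congrFun hv α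
    simp only [Matrix.vecMul, dotProduct, Fintype.sum_sigma,
      degenMatrix_map_apply_of_mem_cell p hα] at hcol
    rw [Finset.sum_eq_single i (fun j _ hj => by simp [hj]) (by simp)] at hcol
    simpa using hcol
  exact _root_.funext fun r => congrFun (hblock r.1) r.2

theorem linearIndependent_row_condMatrix_pow {p : ℕ} [Fact p.Prime] {w : Fin k → Fin 3 → ℕ}
    {d : ℕ} {m : Fin k → ℕ} (h : ∀ i, IsUnisolvent (ZMod p) (m i - 1) (cell w d i)) :
    LinearIndependent ℂ (condMatrix (fun i j => (p : ℂ) ^ w i j) d m).row := by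
  have hp : (p : ℂ) ≠ 0 := Nat.cast_ne_zero.2 (Fact.out : p.Prime).ne_zero
  obtain ⟨a, ha, hind⟩ := exists_forall_linearIndependent_row_map
    (φ := Int.castRingHom (ZMod p)) ZMod.intCast_surjective
    (linearIndependent_row_degenMatrix_map h)
  have ha0 : Int.castRingHom ℂ a ≠ 0 := by
    rw [eq_intCast, Int.cast_ne_zero]
    rintro rfl
    exact ha (map_zero _)
  exact linearIndependent_row_of_mul_eq_mul (fun _ => pow_ne_zero _ hp) (fun _ => pow_ne_zero _ hp)
    (pow_weight_mul_condMatrix p w) (hind _ ha0)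

theorem virtDim_eq_and_generically_projDim_eq (p : ℕ) [Fact p.Prime] (w : Fin k → Fin 3 → ℕ)
    {d : ℕ} {m : Fin k → ℕ} {v : ℤ} (hv : virtDim d m = v) (hm : ∀ i, 1 ≤ m i ∧ m i ≤ d + 1)
    (h : ∀ i, unisolventTest (ZMod p) (m i - 1) (cell w d i)) :
    virtDim d m = v ∧ Generically k fun q => projDim q d m = v := by
  subst hv
  exact ⟨rfl, generically_projDim_eq_virtDim hm <| linearIndependent_row_condMatrix_pow fun i =>
    isUnisolvent_of_unisolventTest (h i)⟩

end Degeneration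

section Weights

/-- Weights whose cells are unisolvent modulo 29 for `L(15, 3, 6⁶)`. -/
def weights15 : Fin 7 → Fin 3 → ℕ :=
  ![![814, 1879, 0], ![342, 0, 1376], ![173, 85, 1235], ![550, 1637, 41], ![138, 408, 662],
    ![0, 564, 704], ![34, 537, 637]]

/-- Weights whose cells are unisolvent modulo 29 for `L(16, 2, 6⁷)`. -/
def weights16 : Fin 8 → Fin 3 → ℕ :=
  ![![1911, 3961, 0], ![0, 4476, 372], ![86, 4324, 198], ![357, 3804, 111], ![2695, 210, 487],
    ![2646, 50, 648], ![2344, 0, 1000], ![2249, 39, 1056]]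

/-- Weights whose cells are unisolvent modulo 29 for `L(17, 1, 6⁸)`. -/
def weights17 : Fin 9 → Fin 3 → ℕ :=
  ![![1750, 2616, 0], ![1024, 0, 1846], ![806, 97, 1644], ![1207, 2410, 1], ![0, 1978, 2065],
    ![837, 1932, 203], ![609, 1158, 627], ![758, 355, 1094], ![686, 344, 1160]]

/-- Weights whose cells are unisolvent modulo 29 for `L(19, 5, 6⁹)`. -/
def weights19 : Fin 10 → Fin 3 → ℕ :=
  ![![3073, 2107, 0], ![2775, 1760, 94], ![550, 1306, 892], ![856, 0, 2481], ![0, 1349, 2178],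
    ![406, 1002, 1093], ![316, 676, 1395], ![525, 119, 2180], ![378, 323, 1762],
    ![421, 328, 1695]]

/-- Weights whose cells are unisolvent modulo 29 for `L(20, 8, 6⁹)`. -/
def weights20 : Fin 10 → Fin 3 → ℕ :=
  ![![2783, 0, 6731], ![0, 5229, 6825], ![9682, 5132, 0], ![9363, 4768, 123],
    ![1376, 4008, 3030], ![1168, 3561, 3345], ![1725, 589, 5940], ![1279, 1425, 4590],
    ![1596, 1274, 4404], ![1388, 1384, 4422]]

end Weights

theorem nonspecial_systems_dim_eq_virtual :
    (virtDim 15 (qh 6 3) = 3 ∧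
      Generically 7 (fun p => projDim p 15 (qh 6 3) = 3)) ∧
    (virtDim 16 (qh 7 2) = 2 ∧
      Generically 8 (fun p => projDim p 16 (qh 7 2) = 2)) ∧
    (virtDim 17 (qh 8 1) = 1 ∧
      Generically 9 (fun p => projDim p 17 (qh 8 1) = 1)) ∧
    (virtDim 19 (qh 9 5) = 5 ∧
      Generically 10 (fun p => projDim p 19 (qh 9 5) = 5)) ∧
    (virtDim 20 (qh 9 8) = 5 ∧
      Generically 10 (fun p => projDim p 20 (qh 9 8) = 5)) := by
  have : Fact (Nat.Prime 29) := ⟨by norm_num⟩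
  refine ⟨virtDim_eq_and_generically_projDim_eq 29 weights15 ?_ ?_ ?_,
    virtDim_eq_and_generically_projDim_eq 29 weights16 ?_ ?_ ?_,
    virtDim_eq_and_generically_projDim_eq 29 weights17 ?_ ?_ ?_,
    virtDim_eq_and_generically_projDim_eq 29 weights19 ?_ ?_ ?_,
    virtDim_eq_and_generically_projDim_eq 29 weights20 ?_ ?_ ?_⟩ <;>
  decide +kernel
end
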